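/- arXiv:1212.2080 — 2 statements merged into one kernel-verified Lean document; each statement's English description precedes it below -/
import Mathlib

section
/- Every convex subset C of a tropical oriented matroid M is connected: any two types A, B ∈ C are joined by a finite sequence of types in C in which consecutive types are incident. In particular, for any two types A, B ∈ M the combinatorial convex hull M_{AB} is connected. -/
/-- A step from `j` to `k` along an edge of the comparability graph `Γ(A,B)`,
traversed in an allowed direction: there is `i` with `j ∈ A i`, `k ∈ B i`, `j ≠ k`
(such an edge is undirected precisely when moreover `j ∈ B i` and `k ∈ A i`, and then
the reversed step is also of this form). -/
def CompStep {n d : ℕ} (A B : Fin n → Finset (Fin d)) (j k : Fin d) : Prop :=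
  ∃ i, j ∈ A i ∧ k ∈ B i ∧ j ≠ k

/-- A traversal of a *directed* edge of `Γ(A,B)` in its given direction. -/
def CompDirStep {n d : ℕ} (A B : Fin n → Finset (Fin d)) (j k : Fin d) : Prop :=
  ∃ i, j ∈ A i ∧ k ∈ B i ∧ j ≠ k ∧ ¬ (j ∈ B i ∧ k ∈ A i)

/-- The comparability graph `Γ(A,B)` is acyclic: there is no closed walk consisting
of legally traversed edges at least one of which is directed. -/
def CompAcyclic {n d : ℕ} (A B : Fin n → Finset (Fin d)) : Prop :=
  ¬ ∃ j k : Fin d, CompDirStep A B j k ∧ Relation.ReflTransGen (CompStep A B) k j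

/-- An ordered partition of the ground set: a list of nonempty, pairwise disjoint
sets covering everything. -/
def IsOrderedPartition {α : Type*} [Fintype α] [DecidableEq α]
    (P : List (Finset α)) : Prop :=
  (∀ p ∈ P, p.Nonempty) ∧ P.Pairwise Disjoint ∧ P.foldr (· ∪ ·) ∅ = Finset.univ

/-- `refineEntry s P = s ∩ P_{m}` where `m` is the first index with `s ∩ P_m ≠ ∅`. -/
def refineEntry {α : Type*} [DecidableEq α] (s : Finset α) :
    List (Finset α) → Finset α
  | [] => ∅
  | p :: rest => if (s ∩ p).Nonempty then s ∩ p else refineEntry s rest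

/-- The refinement `A|_P` of a type `A` with respect to an ordered partition `P`. -/
def refineType {n d : ℕ} (A : Fin n → Finset (Fin d)) (P : List (Finset (Fin d))) :
    Fin n → Finset (Fin d) :=
  fun i => refineEntry (A i) P

/-- `M` is a tropical oriented matroid with parameters `(n,d)`. -/
def IsTOM (n d : ℕ) (M : Set (Fin n → Finset (Fin d))) : Prop :=
  (∀ A ∈ M, ∀ i, (A i).Nonempty) ∧
  (∀ j : Fin d, (fun _ : Fin n => ({j} : Finset (Fin d))) ∈ M) ∧
  (∀ A ∈ M, ∀ B ∈ M, CompAcyclic A B) ∧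
  (∀ A ∈ M, ∀ B ∈ M, ∀ j : Fin n, ∃ C ∈ M, C j = A j ∪ B j ∧
      ∀ k, C k = A k ∨ C k = B k ∨ C k = A k ∪ B k) ∧
  (∀ A ∈ M, ∀ P : List (Finset (Fin d)), IsOrderedPartition P → refineType A P ∈ M)

/-- The type graph `K_A`: the bipartite graph on `N_1,…,N_n,D_1,…,D_d` with an edge
`{N_i, D_j}` whenever `j ∈ A_i`. -/
def typeGraph {n d : ℕ} (A : Fin n → Finset (Fin d)) : SimpleGraph (Fin n ⊕ Fin d) :=
  SimpleGraph.fromRel (fun x y =>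
    match x, y with
    | Sum.inl i, Sum.inr j => j ∈ A i
    | _, _ => False)

/-- The dimension of a type: the number of connected components of `K_A` minus 1
(as an integer). -/
noncomputable def typeDim {n d : ℕ} (A : Fin n → Finset (Fin d)) : ℤ :=
  (Nat.card (typeGraph A).ConnectedComponent : ℤ) - 1

/-- A tropical oriented matroid is in general position if all its type graphs are
acyclic. -/
def InGeneralPosition {n d : ℕ} (M : Set (Fin n → Finset (Fin d))) : Prop :=
  ∀ A ∈ M, (typeGraph A).IsAcyclic

/-- Two types are incident if one is an entrywise subset of the other. -/
def Incident {n d : ℕ} (X Y : Fin n → Finset (Fin d)) : Prop :=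
  (∀ i, X i ⊆ Y i) ∨ (∀ i, Y i ⊆ X i)

/-- The combinatorial convex hull `M_{AB}` of two types within a collection `M`. -/
def Hull {n d : ℕ} (M : Set (Fin n → Finset (Fin d)))
    (A B : Fin n → Finset (Fin d)) : Set (Fin n → Finset (Fin d)) :=
  {C | C ∈ M ∧ ∀ i, C i = A i ∨ C i = B i ∨ C i = A i ∪ B i}

/-- `X` and `Y` are joined by a finite sequence of types in `S` in which consecutive
types are incident. -/
def ConnectedIn {n d : ℕ} (S : Set (Fin n → Finset (Fin d)))
    (X Y : Fin n → Finset (Fin d)) : Prop :=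
  Relation.ReflTransGen (fun U V => U ∈ S ∧ V ∈ S ∧ Incident U V) X Y

theorem refineEntry_filter_ne {α : Type*} [DecidableEq α] (s : Finset α) (P : List (Finset α)) :
    refineEntry s (P.filter (fun p => decide (p ≠ ∅))) = refineEntry s P := by
  induction P with
  | nil => rfl
  | cons p P ih =>
    by_cases hp : p = ∅
    · subst hp
      simp [refineEntry] at ih ⊢
      exact ih
    · simp [refineEntry, hp] at ih ⊢
      rw [ih]

theorem refineEntry_levels {α : Type*} [Fintype α] [DecidableEq α] (f : α → ℕ)
    (s t : Finset α) (c : ℕ) (hts : t ⊆ s) (ht : t.Nonempty) (hc : ∀ x ∈ t, f x = c)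
    (hlt : ∀ x ∈ s, x ∉ t → c < f x) (m : ℕ) : ∀ k, k ≤ c → c < k + m →
    refineEntry s ((List.range' k m).map (fun l => Finset.univ.filter (fun x => f x = l))) = t := by
  induction m with
  | zero => intro k h1 h2; omega
  | succ m ih =>
    intro k h1 h2
    rw [List.range'_succ, List.map_cons]
    by_cases hk : k = c
    · subst hk
      have : s ∩ Finset.univ.filter (fun x => f x = k) = t := by
        ext x
        simp only [Finset.mem_inter, Finset.mem_filter, Finset.mem_univ, true_and]
        constructor
        · rintro ⟨hx, hf⟩
          by_contra hxt
          have := hlt x hx hxt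
          omega
        · intro hx
          exact ⟨hts hx, hc x hx⟩
      simp only [refineEntry, this, ht, if_true]
    · have : ¬ (s ∩ Finset.univ.filter (fun x => f x = k)).Nonempty := by
        rintro ⟨x, hx⟩
        simp only [Finset.mem_inter, Finset.mem_filter, Finset.mem_univ, true_and] at hx
        by_cases hxt : x ∈ t
        · have := hc x hxt
          omega
        · have := hlt x hx.1 hxt
          omega
      simp only [refineEntry, this, if_false]
      exact ih (k + 1) (by omega) (by omega)

theorem mem_foldr_union {α : Type*} [DecidableEq α] (x : α) (P : List (Finset α)) :
    x ∈ P.foldr (· ∪ ·) ∅ ↔ ∃ p ∈ P, x ∈ p := by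
  induction P with
  | nil => simp
  | cons p P ih => simp [ih]

theorem levels_isOrderedPartition {α : Type*} [Fintype α] [DecidableEq α] (f : α → ℕ) (m : ℕ)
    (hf : ∀ x, f x < m) :
    IsOrderedPartition (((List.range' 0 m).map
      (fun l => Finset.univ.filter (fun x => f x = l))).filter (fun p => decide (p ≠ ∅))) := by
  refine ⟨?_, ?_, ?_⟩
  · intro p hp
    rw [List.mem_filter] at hp
    exact Finset.nonempty_iff_ne_empty.2 (by simpa using hp.2)
  · apply List.Pairwise.filter
    rw [List.pairwise_map]
    refine (List.nodup_range' (s := 0) (n := m)).imp ?_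
    intro a b hab
    rw [Finset.disjoint_left]
    intro x hx hy
    simp only [Finset.mem_filter, Finset.mem_univ, true_and] at hx hy
    exact hab (hx.symm.trans hy)
  · ext x
    simp only [Finset.mem_univ, iff_true]
    rw [mem_foldr_union]
    refine ⟨Finset.univ.filter (fun y => f y = f x), ?_, by simp⟩
    rw [List.mem_filter]
    refine ⟨List.mem_map.2 ⟨f x, ?_, rfl⟩, ?_⟩
    · simp [List.mem_range', hf x]
    · rw [decide_eq_true_eq]
      exact Finset.nonempty_iff_ne_empty.1 ⟨x, by simp⟩

theorem inter_mem_of_comparable {n d : ℕ} (M : Set (Fin n → Finset (Fin d))) (hM : IsTOM n d M)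
    (A B : Fin n → Finset (Fin d)) (hA : A ∈ M) (hB : B ∈ M)
    (h : ∀ i, A i ⊆ B i ∨ B i ⊆ A i) : (fun i => A i ∩ B i) ∈ M := by
  classical
  obtain ⟨hne, -, hcomp, -, hsur⟩ := hM
  have hac := hcomp A hA B hB
  let R : Fin d → Finset (Fin d) := fun v =>
    Finset.univ.filter (fun w => Relation.ReflTransGen (CompStep A B) v w)
  let f : Fin d → ℕ := fun v => (R v).card
  have hsub : ∀ a b, CompStep A B a b → R b ⊆ R a := by
    intro a b hab w hw
    simp only [R, Finset.mem_filter, Finset.mem_univ, true_and] at hw ⊢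
    exact Relation.ReflTransGen.head hab hw
  have hle : ∀ a b, CompStep A B a b → f b ≤ f a := fun a b hab =>
    Finset.card_le_card (hsub a b hab)
  have hlt : ∀ a b, CompDirStep A B a b → f b < f a := by
    intro a b hab
    apply Finset.card_lt_card
    obtain ⟨i, h1, h2, h3, h4⟩ := id hab
    refine (Finset.ssubset_iff_of_subset (hsub a b ⟨i, h1, h2, h3⟩)).2 ⟨a, ?_, ?_⟩
    · simp [R, Relation.ReflTransGen.refl]
    · intro ha
      simp only [R, Finset.mem_filter, Finset.mem_univ, true_and] at ha
      exact hac ⟨a, b, hab, ha⟩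
  have hfd : ∀ x, f x < d + 1 := by
    intro x
    have := Finset.card_le_univ (R x)
    simp only [Fintype.card_fin] at this
    exact Nat.lt_succ_of_le this
  have key := hsur A hA _ (levels_isOrderedPartition f (d + 1) hfd)
  convert key using 1
  funext i
  have hint : (A i ∩ B i).Nonempty := by
    rcases h i with h | h
    · rw [Finset.inter_eq_left.2 h]; exact hne A hA i
    · rw [Finset.inter_eq_right.2 h]; exact hne B hB i
  obtain ⟨x₀, hx₀⟩ := id hint
  have hx₀' := Finset.mem_inter.1 hx₀
  symm
  unfold refineType
  rw [refineEntry_filter_ne]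
  refine refineEntry_levels f (A i) (A i ∩ B i) (f x₀) Finset.inter_subset_left hint ?_ ?_ (d + 1) 0
    (Nat.zero_le _) (by have := hfd x₀; omega)
  · intro x hx
    have hx' := Finset.mem_inter.1 hx
    by_cases hxx : x = x₀
    · rw [hxx]
    · exact le_antisymm (hle x₀ x ⟨i, hx₀'.1, hx'.2, fun e => hxx e.symm⟩)
        (hle x x₀ ⟨i, hx'.1, hx₀'.2, hxx⟩)
  · intro x hx hxn
    have hxB : x ∉ B i := fun hb => hxn (Finset.mem_inter.2 ⟨hx, hb⟩)
    exact hlt x x₀ ⟨i, hx, hx₀'.2, fun e => hxB (e ▸ hx₀'.2), fun hh => hxB hh.1⟩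

theorem convex_connected {n d : ℕ} (M : Set (Fin n → Finset (Fin d))) (hM : IsTOM n d M)
    (C : Set (Fin n → Finset (Fin d))) (hCM : C ⊆ M)
    (hconv : ∀ A ∈ C, ∀ B ∈ C, Hull M A B ⊆ C) (N : ℕ) :
    ∀ A ∈ C, ∀ B ∈ C,
      (Finset.univ.filter (fun i => ¬ (A i ⊆ B i ∨ B i ⊆ A i))).card = N → ConnectedIn C A B := by
  induction N using Nat.strong_induction_on with
  | _ N ih =>
    intro A hA B hB hN
    by_cases h : ∀ i, A i ⊆ B i ∨ B i ⊆ A i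
    · have hI := inter_mem_of_comparable M hM A B (hCM hA) (hCM hB) h
      have hIC : (fun i => A i ∩ B i) ∈ C := by
        refine hconv A hA B hB ⟨hI, fun i => ?_⟩
        rcases h i with h | h
        · exact Or.inl (Finset.inter_eq_left.2 h)
        · exact Or.inr (Or.inl (Finset.inter_eq_right.2 h))
      refine Relation.ReflTransGen.head (b := fun i => A i ∩ B i)
        ⟨hA, hIC, Or.inr fun i => Finset.inter_subset_left⟩ (Relation.ReflTransGen.single
        ⟨hIC, hB, Or.inl fun i => Finset.inter_subset_right⟩)
    · obtain ⟨j, hj⟩ := not_forall.1 h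
      obtain ⟨Z, hZM, hZj, hZ⟩ := hM.2.2.2.1 A (hCM hA) B (hCM hB) j
      have hZC : Z ∈ C := hconv A hA B hB ⟨hZM, hZ⟩
      refine Relation.ReflTransGen.trans (ih _ ?_ A hA Z hZC rfl) (ih _ ?_ Z hZC B hB rfl)
      · rw [← hN]
        apply Finset.card_lt_card
        refine (Finset.ssubset_iff_of_subset ?_).2 ⟨j, by simpa using hj, ?_⟩
        · intro k hk
          simp only [Finset.mem_filter, Finset.mem_univ, true_and] at hk ⊢
          rcases hZ k with e | e | e <;> rw [e] at hk
          · exact absurd (Or.inl (Finset.Subset.refl _)) hk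
          · exact hk
          · exact absurd (Or.inl Finset.subset_union_left) hk
        · simp [hZj]
      · rw [← hN]
        apply Finset.card_lt_card
        refine (Finset.ssubset_iff_of_subset ?_).2 ⟨j, by simpa using hj, ?_⟩
        · intro k hk
          simp only [Finset.mem_filter, Finset.mem_univ, true_and] at hk ⊢
          rcases hZ k with e | e | e <;> rw [e] at hk
          · exact hk
          · exact absurd (Or.inl (Finset.Subset.refl _)) hk
          · exact absurd (Or.inr Finset.subset_union_right) hk
        · simp [hZj]

theorem stmt_2 {n d : ℕ} (M : Set (Fin n → Finset (Fin d))) (hM : IsTOM n d M)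
    (C : Set (Fin n → Finset (Fin d))) (hCM : C ⊆ M)
    (hconv : ∀ A ∈ C, ∀ B ∈ C, Hull M A B ⊆ C) :
    (∀ A ∈ C, ∀ B ∈ C, ConnectedIn C A B) ∧
    (∀ A ∈ M, ∀ B ∈ M, ∀ X ∈ Hull M A B, ∀ Y ∈ Hull M A B,
      ConnectedIn (Hull M A B) X Y) := by
  refine ⟨fun A hA B hB => convex_connected M hM C hCM hconv _ A hA B hB rfl, ?_⟩
  intro A hA B hB X hX Y hY
  refine convex_connected M hM (Hull M A B) (fun Z hZ => hZ.1) ?_ _ X hX Y hY rfl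
  rintro U ⟨-, hU⟩ V ⟨-, hV⟩ Z ⟨hZM, hZ⟩
  refine ⟨hZM, fun i => ?_⟩
  rcases hZ i with e | e | e
  · rw [e]; exact hU i
  · rw [e]; exact hV i
  · rw [e]
    rcases hU i with u | u | u <;> rcases hV i with v | v | v <;> rw [u, v] <;>
      simp [Finset.union_comm]
end

section
/- Let M be a tropical oriented matroid with parameters (n,d) in general position, let E ⊆ [n], and for each i ∈ E let I_i be a nonempty proper subset of [d]. Suppose there exists A ∈ M such that A_i ∩ I_i ≠ ∅ and A_i \ I_i ≠ ∅ for every i ∈ E. Then for every sign vector X ∈ {+, −, 0}^E there exists B ∈ M such that for each i ∈ E: B_i ⊆ I_i if X_i = +; B_i ⊆ [d] \ I_i if X_i = −; and B_i ∩ I_i ≠ ∅ and B_i \ I_i ≠ ∅ if X_i = 0. -/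
theorem typeGraph_adj_aux {n d : ℕ} (A : Fin n → Finset (Fin d)) (i : Fin n) (j : Fin d) :
    (typeGraph A).Adj (Sum.inl i) (Sum.inr j) ↔ j ∈ A i := by
  simp [typeGraph]

theorem update_mem_aux {n d : ℕ} (M : Set (Fin n → Finset (Fin d)))
    (hM : IsTOM n d M) (hgen : InGeneralPosition M)
    (A : Fin n → Finset (Fin d)) (hA : A ∈ M) (i : Fin n) (T : Finset (Fin d))
    (hT : T ⊆ A i) (hne : T.Nonempty) : Function.update A i T ∈ M := by
  classical
  by_cases hEq : T = A i
  · subst hEq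
    simpa using hA
  obtain ⟨j0, hj0A, hj0T⟩ : ∃ j ∈ A i, j ∉ T := by
    by_contra hcon
    push Not at hcon
    exact hEq (Finset.Subset.antisymm hT hcon)
  set B := Function.update A i T with hB
  have hBi : B i = T := by simp [hB]
  have hBk : ∀ k, k ≠ i → B k = A k := fun k hk => by simp [hB, hk]
  have hsub : ∀ k, B k ⊆ A k := by
    intro k
    by_cases hk : k = i
    · subst hk; rw [hBi]; exact hT
    · rw [hBk k hk]
  set S : Finset (Fin d) :=
    Finset.univ.filter (fun j => (typeGraph B).Reachable (Sum.inl i) (Sum.inr j)) with hS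
  have hTS : T ⊆ S := by
    intro j hj
    simp only [hS, Finset.mem_filter, Finset.mem_univ, true_and]
    exact ((typeGraph_adj_aux B i j).2 (hBi ▸ hj)).reachable
  have hout : ∀ j ∈ A i, j ∉ T → j ∉ S := by
    intro j hj hjT hjS
    simp only [hS, Finset.mem_filter, Finset.mem_univ, true_and] at hjS
    have hadj := (typeGraph_adj_aux A i j).2 hj
    have hb := SimpleGraph.isAcyclic_iff_forall_adj_isBridge.1 (hgen A hA) hadj
    rw [SimpleGraph.isBridge_iff] at hb
    refine hb (hjS.mono ?_)
    intro x y hxy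
    rcases x with a | a <;> rcases y with b | b
    · simp [typeGraph] at hxy
    · rw [typeGraph_adj_aux] at hxy
      simp only [SimpleGraph.deleteEdges_adj, typeGraph_adj_aux]
      have := hsub a hxy
      have h2 : ¬ (a = i ∧ b = j) := by
        rintro ⟨rfl, rfl⟩
        exact hjT (hBi ▸ hxy)
      simp [this, h2]
      try tauto
    · have hxy' := hxy.symm
      rw [typeGraph_adj_aux] at hxy'
      rw [SimpleGraph.adj_comm]
      simp only [SimpleGraph.deleteEdges_adj, typeGraph_adj_aux]
      have := hsub b hxy'
      have h2 : ¬ (b = i ∧ a = j) := by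
        rintro ⟨rfl, rfl⟩
        exact hjT (hBi ▸ hxy')
      simp [this, h2]
      try tauto
    · simp [typeGraph] at hxy
  have hP : IsOrderedPartition [S, Sᶜ] := by
    refine ⟨?_, ?_, ?_⟩
    · intro p hp
      simp only [List.mem_cons, List.not_mem_nil, or_false] at hp
      rcases hp with rfl | rfl
      · exact hne.mono hTS
      · exact ⟨j0, Finset.mem_compl.2 (hout j0 hj0A hj0T)⟩
    · simp [disjoint_compl_right]
    · simp
  have hr := hM.2.2.2.2 A hA _ hP
  have : refineType A [S, Sᶜ] = B := by
    funext k
    by_cases hk : k = i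
    · subst hk
      have h1 : A k ∩ S = T := by
        ext j
        rw [Finset.mem_inter]
        constructor
        · rintro ⟨h1, h2⟩
          by_contra h3
          exact hout j h1 h3 h2
        · exact fun h => ⟨hT h, hTS h⟩
      simp [refineType, refineEntry, h1, hne, hBi]
    · rw [hBk k hk]
      by_cases hx : (A k ∩ S).Nonempty
      · simp only [refineType, refineEntry, hx, if_true]
        obtain ⟨j, hj⟩ := hx
        rw [Finset.mem_inter] at hj
        rw [Finset.inter_eq_left]
        intro l hl
        have hjS := hj.2
        simp only [hS, Finset.mem_filter, Finset.mem_univ, true_and] at hjS ⊢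
        have e1 := (typeGraph_adj_aux B k j).2 (by rw [hBk k hk]; exact hj.1)
        have e2 := (typeGraph_adj_aux B k l).2 (by rw [hBk k hk]; exact hl)
        exact (hjS.trans e1.symm.reachable).trans e2.reachable
      · have hsc : A k ∩ Sᶜ = A k := by
          rw [Finset.inter_eq_left]
          intro l hl
          rw [Finset.mem_compl]
          intro hlS
          exact hx ⟨l, Finset.mem_inter.2 ⟨hl, hlS⟩⟩
        have := hM.1 A hA k
        simp only [refineType, refineEntry, hx, if_false, hsc, this, if_true]
  rwa [this] at hr

theorem multi_aux {n d : ℕ} (M : Set (Fin n → Finset (Fin d)))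
    (hM : IsTOM n d M) (hgen : InGeneralPosition M)
    (A : Fin n → Finset (Fin d)) (hA : A ∈ M) (T : Fin n → Finset (Fin d))
    (hT : ∀ i, T i ⊆ A i) (hne : ∀ i, (T i).Nonempty) : T ∈ M := by
  classical
  have key : ∀ s : Finset (Fin n), (fun k => if k ∈ s then T k else A k) ∈ M := by
    intro s
    induction s using Finset.induction_on with
    | empty => simpa using hA
    | insert a s ha ih =>
      have := update_mem_aux M hM hgen _ ih a (T a) (by simp [ha, hT a]) (hne a)
      convert this using 1
      funext k
      by_cases hk : k = a
      · subst hk; simp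
      · simp [hk]
  simpa using key Finset.univ

theorem stmt_4 {n d : ℕ} (M : Set (Fin n → Finset (Fin d)))
    (hM : IsTOM n d M) (hgen : InGeneralPosition M)
    (E : Set (Fin n)) (I : Fin n → Finset (Fin d))
    (hI : ∀ i ∈ E, (I i).Nonempty ∧ I i ≠ Finset.univ)
    (A : Fin n → Finset (Fin d)) (hA : A ∈ M)
    (hAI : ∀ i ∈ E, (A i ∩ I i).Nonempty ∧ (A i \ I i).Nonempty)
    (X : Fin n → SignType) :
    ∃ B ∈ M, ∀ i ∈ E,
      (X i = SignType.pos → B i ⊆ I i) ∧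
      (X i = SignType.neg → B i ⊆ Finset.univ \ I i) ∧
      (X i = SignType.zero → (B i ∩ I i).Nonempty ∧ (B i \ I i).Nonempty) := by
  classical
  refine ⟨fun i => if i ∈ E then (if X i = SignType.pos then A i ∩ I i else
    if X i = SignType.neg then A i \ I i else A i) else A i,
    multi_aux M hM hgen A hA _ ?_ ?_, ?_⟩
  · intro i
    split_ifs <;> simp
  · intro i
    split_ifs with h1 h2 h3
    · exact (hAI i h1).1
    · exact (hAI i h1).2
    · exact hM.1 A hA i
    · exact hM.1 A hA i
  · intro i hi
    refine ⟨fun h => ?_, fun h => ?_, fun h => ?_⟩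
    · simp [hi, h]
    · have hn : SignType.neg ≠ SignType.pos := by decide
      simp only [hi, h, hn, if_true, if_false]
      exact Finset.sdiff_subset_sdiff (Finset.subset_univ _) (le_refl _)
    · have hn : SignType.zero ≠ SignType.pos := by decide
      have hn' : SignType.zero ≠ SignType.neg := by decide
      simp only [hi, h, hn, hn', if_true, if_false]
      exact hAI i hi
end
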